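/- For α > 0 and τ ∈ Q_p/Z_p with |τ|_p = p^m > 1, the integral ((1-p^α)/(1-p^{-(α+1)})) ∫_{Z_p} (e^{2πi{τ t}_p} - 1)/|t|_p^{α+1} dt equals |τ|_p^α - (1-p^{-1})/(1-p^{-(α+1)}). -/

import Mathlib

open MeasureTheory

noncomputable section

variable (p : ℕ) [Fact p.Prime]

/-- Truncation of a `p`-adic number to a `p`-adic integer (`0` if it is not an integer). -/
def padicToInt (x : ℚ_[p]) : ℤ_[p] := if h : ‖x‖ ≤ 1 then ⟨x, h⟩ else 0

/-- The `p`-adic fractional part `{x}_p`, as a rational number. -/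
def padicFract (x : ℚ_[p]) : ℚ :=
  ((padicToInt p (x * (p : ℚ_[p]) ^ (-x.valuation).toNat)).appr (-x.valuation).toNat : ℚ) /
    (p : ℚ) ^ (-x.valuation).toNat

/-- The additive character `x ↦ e^{2πi {x}_p}` of `ℚ_p`. -/
def eChar (x : ℚ_[p]) : ℂ := Complex.exp (2 * Real.pi * Complex.I * (padicFract p x : ℂ))

instance : MeasurableSpace ℤ_[p] := borel _
instance : BorelSpace ℤ_[p] := ⟨rfl⟩

/-- The normalizing constant `(1 - p^α)/(1 - p^{-(α+1)})` of the Vladimirov–Taibleson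
operator. -/
def vtConst (α : ℝ) : ℝ := (1 - (p : ℝ) ^ α) / (1 - (p : ℝ) ^ (-(α + 1)))

/-- The constant `(1 - p^{-1})/(1 - p^{-(α+1)})`. -/
def vtShift (α : ℝ) : ℝ := (1 - (p : ℝ)⁻¹) / (1 - (p : ℝ) ^ (-(α + 1)))

variable (d : ℕ)

/-!
Put `r = p ^ (α + 1)` and `g t = e^{2πi{τt}} - 1`. Since `g` vanishes on `p ^ m ℤ_p`, the kernel
`1 / |t| ^ (α + 1)` may be replaced by `r⁻¹ + (1 - r⁻¹) ∑_{k < m} r ^ k 1_{p ^ k ℤ_p}`, with which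
it agrees off that ball. For `k < m` the character `t ↦ e^{2πi{τt}}` is nontrivial on `p ^ k ℤ_p`,
so its integral there is zero and `g` integrates to `-p⁻ᵏ`; what remains is a geometric sum with
ratio `p ^ α`.
-/

section Character

variable {p}

lemma norm_le_one_iff_of_norm_sub_le_one {x y : ℚ_[p]} (h : ‖x - y‖ ≤ 1) : ‖x‖ ≤ 1 ↔ ‖y‖ ≤ 1 := by
  have hmem : x - y ∈ PadicInt.subring p := h
  have := add_mem_cancel_left (y := y) hmem
  rwa [sub_add_cancel] at this

lemma norm_sub_div_pow_le_one_iff {x y : ℚ_[p]} {n : ℕ} :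
    ‖x - y / (p : ℚ_[p]) ^ n‖ ≤ 1 ↔ ‖x * (p : ℚ_[p]) ^ n - y‖ ≤ (p : ℝ) ^ (-n : ℤ) := by
  have hp : (p : ℚ_[p]) ^ n ≠ 0 := pow_ne_zero n (NeZero.ne _)
  have hpos : (0 : ℝ) < (p : ℝ) ^ (-n : ℤ) := zpow_pos (mod_cast (Fact.out : p.Prime).pos) _
  rw [sub_div' hp, norm_div, Padic.norm_p_pow, div_le_one hpos]

lemma norm_intCast_div_pow_le_one_iff {a : ℤ} {n : ℕ} :
    ‖(a : ℚ_[p]) / (p : ℚ_[p]) ^ n‖ ≤ 1 ↔ (p ^ n : ℤ) ∣ a := by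
  have := norm_sub_div_pow_le_one_iff (x := 0) (y := (a : ℚ_[p])) (n := n)
  rwa [zero_mul, zero_sub, zero_sub, norm_neg, norm_neg, Padic.norm_int_le_pow_iff_dvd] at this

lemma norm_sub_appr_div_pow_le_one {x : ℚ_[p]} {n : ℕ} (hx : ‖x‖ ≤ (p : ℝ) ^ n) :
    ‖x - ((padicToInt p (x * (p : ℚ_[p]) ^ n)).appr n : ℚ_[p]) / (p : ℚ_[p]) ^ n‖ ≤ 1 := by
  have hpos : (0 : ℝ) < (p : ℝ) ^ n := pow_pos (mod_cast (Fact.out : p.Prime).pos) n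
  have hint : ‖x * (p : ℚ_[p]) ^ n‖ ≤ 1 := by
    rwa [norm_mul, Padic.norm_p_pow, zpow_neg, zpow_natCast, ← div_eq_mul_inv, div_le_one hpos]
  have hcoe : (padicToInt p (x * (p : ℚ_[p]) ^ n) : ℚ_[p]) = x * (p : ℚ_[p]) ^ n :=
    congrArg (fun t : ℤ_[p] ↦ (t : ℚ_[p])) (dif_pos hint)
  rw [norm_sub_div_pow_le_one_iff]
  simpa [PadicInt.norm_def, hcoe] using
    (PadicInt.norm_le_pow_iff_mem_span_pow _ n).2 (PadicInt.appr_spec n (padicToInt p (x * p ^ n)))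

lemma norm_le_pow_toNat_neg_valuation (x : ℚ_[p]) : ‖x‖ ≤ (p : ℝ) ^ (-x.valuation).toNat := by
  obtain rfl | hx := eq_or_ne x 0
  · simp
  · rw [Padic.norm_eq_zpow_neg_valuation hx, ← zpow_natCast]
    exact zpow_le_zpow_right₀ (mod_cast (Fact.out : p.Prime).one_le) (Int.self_le_toNat _)

lemma cexp_two_pi_I_mul_eq_of_norm_sub_le_one {a b : ℤ} {k n : ℕ}
    (h : ‖(a : ℚ_[p]) / (p : ℚ_[p]) ^ k - (b : ℚ_[p]) / (p : ℚ_[p]) ^ n‖ ≤ 1) :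
    Complex.exp (2 * Real.pi * Complex.I * (a / (p : ℂ) ^ k)) =
      Complex.exp (2 * Real.pi * Complex.I * (b / (p : ℂ) ^ n)) := by
  have hp : (p : ℂ) ≠ 0 := NeZero.ne _
  have hdvd : (p ^ (k + n) : ℤ) ∣ a * p ^ n - p ^ k * b := by
    rw [← norm_intCast_div_pow_le_one_iff]
    convert h using 2
    rw [div_sub_div _ _ (pow_ne_zero k (NeZero.ne _)) (pow_ne_zero n (NeZero.ne _)), pow_add]
    push_cast
    rfl
  obtain ⟨z, hz⟩ := hdvd
  have hzC : (a * p ^ n - p ^ k * b : ℂ) = p ^ (k + n) * z := mod_cast hz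
  refine Complex.exp_eq_exp_iff_exists_int.2 ⟨z, ?_⟩
  field_simp
  linear_combination hzC

lemma eChar_eq_cexp {x : ℚ_[p]} {a : ℤ} {n : ℕ} (h : ‖x - (a : ℚ_[p]) / (p : ℚ_[p]) ^ n‖ ≤ 1) :
    eChar p x = Complex.exp (2 * Real.pi * Complex.I * (a / (p : ℂ) ^ n)) := by
  have hx := norm_sub_appr_div_pow_le_one (norm_le_pow_toNat_neg_valuation x)
  rw [eChar, padicFract]
  generalize (padicToInt p _).appr _ = c at hx ⊢
  have hsub := (PadicInt.subring p).sub_mem h hx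
  rw [sub_sub_sub_cancel_left, PadicInt.mem_subring_iff, ← Int.cast_natCast c] at hsub
  rw [← cexp_two_pi_I_mul_eq_of_norm_sub_le_one hsub]
  push_cast
  rfl

lemma exists_norm_sub_div_pow_le_one {x : ℚ_[p]} {n : ℕ} (hx : ‖x‖ ≤ (p : ℝ) ^ n) :
    ∃ a : ℤ, ‖x - (a : ℚ_[p]) / (p : ℚ_[p]) ^ n‖ ≤ 1 :=
  ⟨((padicToInt p (x * (p : ℚ_[p]) ^ n)).appr n : ℕ), by
    rw [Int.cast_natCast]
    exact norm_sub_appr_div_pow_le_one hx⟩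

lemma eChar_add (x y : ℚ_[p]) : eChar p (x + y) = eChar p x * eChar p y := by
  obtain ⟨n, hn⟩ := pow_unbounded_of_one_lt (max ‖x‖ ‖y‖)
    (show (1 : ℝ) < p from mod_cast (Fact.out : p.Prime).one_lt)
  obtain ⟨a, ha⟩ := exists_norm_sub_div_pow_le_one ((le_max_left _ _).trans hn.le)
  obtain ⟨b, hb⟩ := exists_norm_sub_div_pow_le_one ((le_max_right _ _).trans hn.le)
  have hab : ‖x + y - ((a + b : ℤ) : ℚ_[p]) / (p : ℚ_[p]) ^ n‖ ≤ 1 := by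
    rw [Int.cast_add, add_div, add_sub_add_comm]
    exact (PadicInt.subring p).add_mem ha hb
  rw [eChar_eq_cexp ha, eChar_eq_cexp hb, eChar_eq_cexp hab, ← Complex.exp_add]
  push_cast
  ring_nf

lemma eChar_eq_one_iff {x : ℚ_[p]} : eChar p x = 1 ↔ ‖x‖ ≤ 1 := by
  obtain ⟨a, ha⟩ := exists_norm_sub_div_pow_le_one (norm_le_pow_toNat_neg_valuation x)
  set n := (-x.valuation).toNat
  have hζ := Complex.isPrimitiveRoot_exp (p ^ n) (pow_ne_zero n (Fact.out : p.Prime).ne_zero)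
  have hpow : eChar p x = Complex.exp (2 * Real.pi * Complex.I / (p ^ n : ℕ)) ^ a := by
    rw [eChar_eq_cexp ha, ← Complex.exp_int_mul]
    push_cast
    ring_nf
  rw [hpow, hζ.zpow_eq_one_iff_dvd, norm_le_one_iff_of_norm_sub_le_one ha,
    norm_intCast_div_pow_le_one_iff, Nat.cast_pow]

lemma isLocallyConstant_eChar : IsLocallyConstant (eChar p) := by
  rw [IsLocallyConstant.iff_eventually_eq]
  intro x
  filter_upwards [Metric.closedBall_mem_nhds x one_pos] with y hy
  rw [← sub_add_cancel y x, eChar_add, eChar_eq_one_iff.2 (mem_closedBall_iff_norm.1 hy), one_mul]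

/-- The character `t ↦ e^{2πi{τt}_p}` of `ℤ_p`; it depends only on the class of `τ` in
`ℚ_p/ℤ_p`, the Pontryagin dual of `ℤ_p`. -/
def intChar (τ : ℚ_[p]) : AddChar ℤ_[p] ℂ where
  toFun t := eChar p (τ * t)
  map_zero_eq_one' := by simp [eChar_eq_one_iff]
  map_add_eq_mul' s t := by rw [PadicInt.coe_add, mul_add, eChar_add]

lemma intChar_eq_one_iff {τ : ℚ_[p]} {t : ℤ_[p]} : intChar τ t = 1 ↔ ‖τ‖ * ‖t‖ ≤ 1 := by
  rw [PadicInt.norm_def, ← norm_mul]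
  exact eChar_eq_one_iff

lemma continuous_intChar (τ : ℚ_[p]) : Continuous (intChar τ) :=
  isLocallyConstant_eChar.continuous.comp (by fun_prop : Continuous fun t : ℤ_[p] ↦ τ * (t : ℚ_[p]))

end Character

section Ball

/-- The ball `p ^ k ℤ_p` of radius `p ^ (-k)` about `0`, as a subgroup of `ℤ_p`. -/
def padicBall (k : ℕ) : AddSubgroup ℤ_[p] :=
  (Ideal.span {(p : ℤ_[p]) ^ k}).toAddSubgroup

variable {p}

lemma mem_padicBall {k : ℕ} {t : ℤ_[p]} : t ∈ padicBall p k ↔ ‖t‖ ≤ (p : ℝ) ^ (-k : ℤ) :=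
  (PadicInt.norm_le_pow_iff_mem_span_pow t k).symm

lemma measurableSet_padicBall (k : ℕ) : MeasurableSet (padicBall p k : Set ℤ_[p]) := by
  have : (padicBall p k : Set ℤ_[p]) = {t | ‖t‖ ≤ (p : ℝ) ^ (-k : ℤ)} :=
    Set.ext fun _ ↦ mem_padicBall
  rw [this]
  exact (isClosed_le continuous_norm continuous_const).measurableSet

lemma index_padicBall (k : ℕ) : (padicBall p k).index = p ^ k := by
  have hker : padicBall p k = (PadicInt.toZModPow (p := p) k).toAddMonoidHom.ker := by
    ext t
    exact (PadicInt.ker_toZModPow (p := p) k ▸ Iff.rfl :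
      t ∈ Ideal.span {(p : ℤ_[p]) ^ k} ↔ t ∈ RingHom.ker (PadicInt.toZModPow k))
  rw [hker, AddSubgroup.index_ker,
    AddMonoidHom.range_eq_top.2 (ZMod.ringHom_surjective (PadicInt.toZModPow k)),
    AddSubgroup.card_top, Nat.card_zmod]

lemma measureReal_padicBall (μ : Measure ℤ_[p]) [IsProbabilityMeasure μ] [μ.IsAddLeftInvariant]
    (k : ℕ) : μ.real (padicBall p k) = ((p : ℝ) ^ k)⁻¹ := by
  have : (padicBall p k).FiniteIndex :=
    ⟨by rw [index_padicBall]; exact pow_ne_zero k (Fact.out : p.Prime).ne_zero⟩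
  have hμ := congrArg ENNReal.toReal
    (AddSubgroup.index_mul_measure (padicBall p k) (measurableSet_padicBall k) μ)
  rw [index_padicBall, measure_univ, ENNReal.toReal_mul] at hμ
  exact eq_inv_of_mul_eq_one_right (by simpa [Measure.real] using hμ)

lemma inv_norm_rpow_eq_sum_indicator (s : ℝ) {m : ℕ} {t : ℤ_[p]} (ht : t ∉ padicBall p m) :
    (‖t‖ ^ s)⁻¹ = (p : ℝ) ^ (-s) + (1 - (p : ℝ) ^ (-s)) *
      ∑ k ∈ Finset.range m,
        (padicBall p k : Set ℤ_[p]).indicator (fun _ ↦ ((p : ℝ) ^ s) ^ k) t := by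
  classical
  have hp : (0 : ℝ) < p := mod_cast (Fact.out : p.Prime).pos
  have ht₀ : t ≠ 0 := fun h ↦ ht (h ▸ zero_mem _)
  have hmem (k : ℕ) : t ∈ padicBall p k ↔ k ≤ t.valuation := by
    rw [mem_padicBall, PadicInt.norm_le_pow_iff_le_valuation t ht₀]
  have hsum : ∑ k ∈ Finset.range m,
      (padicBall p k : Set ℤ_[p]).indicator (fun _ ↦ ((p : ℝ) ^ s) ^ k) t =
        ∑ k ∈ Finset.range (t.valuation + 1), ((p : ℝ) ^ s) ^ k := by
    simp only [Set.indicator_apply, SetLike.mem_coe, ← Finset.sum_filter]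
    congr 1
    ext k
    simp only [Finset.mem_filter, Finset.mem_range, hmem]
    have := (hmem m).not.1 ht
    lia
  have hnorm : (‖t‖ ^ s)⁻¹ = ((p : ℝ) ^ s) ^ t.valuation := by
    rw [PadicInt.norm_eq_zpow_neg_valuation ht₀, zpow_neg, zpow_natCast,
      Real.inv_rpow (by positivity), inv_inv, Real.rpow_pow_comm hp.le]
  have hr : (p : ℝ) ^ s ≠ 0 := (Real.rpow_pos_of_pos hp s).ne'
  have hgeom := mul_neg_geom_sum ((p : ℝ) ^ s) (t.valuation + 1)
  rw [hsum, hnorm, Real.rpow_neg hp.le]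
  field_simp
  linear_combination hgeom

variable {E : Type*} [NormedAddCommGroup E] [NormedSpace ℝ E]

lemma inv_norm_rpow_smul_eq_sum_indicator (s : ℝ) {m : ℕ} {g : ℤ_[p] → E}
    (hg : ∀ t ∈ padicBall p m, g t = 0) (t : ℤ_[p]) :
    (‖t‖ ^ s)⁻¹ • g t = (p : ℝ) ^ (-s) • g t + (1 - (p : ℝ) ^ (-s)) •
      ∑ k ∈ Finset.range m, ((p : ℝ) ^ s) ^ k • (padicBall p k : Set ℤ_[p]).indicator g t := by
  classical
  by_cases ht : t ∈ padicBall p m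
  · simp [Set.indicator_apply, hg t ht]
  · rw [inv_norm_rpow_eq_sum_indicator s ht, add_smul, mul_smul, Finset.sum_smul]
    simp only [Set.indicator_apply, ite_smul, zero_smul, smul_ite, smul_zero]

lemma integral_inv_norm_rpow_smul (s : ℝ) {m : ℕ} {μ : Measure ℤ_[p]} {g : ℤ_[p] → E}
    (hgi : Integrable g μ) (hg : ∀ t ∈ padicBall p m, g t = 0) :
    ∫ t, (‖t‖ ^ s)⁻¹ • g t ∂μ = (p : ℝ) ^ (-s) • ∫ t, g t ∂μ + (1 - (p : ℝ) ^ (-s)) •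
      ∑ k ∈ Finset.range m, ((p : ℝ) ^ s) ^ k • ∫ t in padicBall p k, g t ∂μ := by
  have hint (k : ℕ) :
      Integrable (fun t ↦ ((p : ℝ) ^ s) ^ k • (padicBall p k : Set ℤ_[p]).indicator g t) μ :=
    (hgi.indicator (measurableSet_padicBall k)).smul _
  simp_rw [inv_norm_rpow_smul_eq_sum_indicator s hg]
  rw [integral_add (hgi.fun_smul _) ((integrable_finsetSum _ fun k _ ↦ hint k).fun_smul _),
    integral_smul, integral_smul, integral_finsetSum _ fun k _ ↦ hint k]
  simp_rw [integral_smul, integral_indicator (measurableSet_padicBall _)]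

end Ball

lemma setIntegral_addChar_eq_zero {G 𝕜 : Type*} [AddGroup G] [MeasurableSpace G] [MeasurableAdd G]
    [RCLike 𝕜] (μ : Measure G) [μ.IsAddRightInvariant] {H : AddSubgroup G} {ψ : AddChar G 𝕜} {h : G}
    (hh : h ∈ H) (hψ : ψ h ≠ 1) : ∫ t in H, ψ t ∂μ = 0 := by
  have hpre : (· + h) ⁻¹' (H : Set G) = H := Set.ext fun _ ↦ H.add_mem_cancel_right hh
  have htranslate : (∫ t in H, ψ t ∂μ) * ψ h = ∫ t in H, ψ t ∂μ := calc
    (∫ t in H, ψ t ∂μ) * ψ h = ∫ t in (· + h) ⁻¹' (H : Set G), ψ (t + h) ∂μ := by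
      simp_rw [hpre, AddChar.map_add_eq_mul, integral_mul_const]
    _ = ∫ t in H, ψ t ∂μ :=
      (measurePreserving_add_right μ h).setIntegral_preimage_emb
        (measurableEmbedding_addRight h) ψ H
  by_contra hne
  exact hψ ((mul_eq_left₀ hne).1 htranslate)

section Integral

variable {p} {τ : ℚ_[p]} {μ : Measure ℤ_[p]}

lemma integrable_intChar [IsFiniteMeasure μ] : Integrable (intChar τ) μ :=
  (continuous_intChar τ).integrable_of_hasCompactSupport (HasCompactSupport.of_compactSpace _)

variable [IsProbabilityMeasure μ] [μ.IsAddLeftInvariant]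

lemma setIntegral_intChar_sub_one {k : ℕ} (hk : (p : ℝ) ^ k < ‖τ‖) :
    ∫ t in padicBall p k, (intChar τ t - 1) ∂μ = -((p : ℂ) ^ k)⁻¹ := by
  have hp : (0 : ℝ) < (p : ℝ) ^ k := pow_pos (mod_cast (Fact.out : p.Prime).pos) k
  have hmem : (p : ℤ_[p]) ^ k ∈ padicBall p k := mem_padicBall.2 (PadicInt.norm_p_pow k).le
  have hne : intChar τ ((p : ℤ_[p]) ^ k) ≠ 1 := by
    rw [Ne, intChar_eq_one_iff, PadicInt.norm_p_pow, zpow_neg, zpow_natCast, ← div_eq_mul_inv,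
      div_le_one hp, not_le]
    exact hk
  rw [integral_sub integrable_intChar.integrableOn (integrable_const _),
    setIntegral_addChar_eq_zero μ hmem hne, setIntegral_const, measureReal_padicBall]
  simp

lemma integral_intChar_sub_one_div_norm_rpow (s : ℝ) {m : ℕ} (hm : 0 < m)
    (hτ : ‖τ‖ = (p : ℝ) ^ m) :
    ∫ t, (intChar τ t - 1) / ((‖t‖ ^ s : ℝ) : ℂ) ∂μ =
      ((-((p : ℝ) ^ (-s) + (1 - (p : ℝ) ^ (-s)) *
        ∑ k ∈ Finset.range m, ((p : ℝ) ^ (s - 1)) ^ k) : ℝ) : ℂ) := by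
  have hp : (1 : ℝ) < p := mod_cast (Fact.out : p.Prime).one_lt
  have hp₀ : (0 : ℝ) < p := zero_lt_one.trans hp
  have hvanish : ∀ t ∈ padicBall p m, intChar τ t - 1 = 0 := fun t ht ↦ by
    rw [sub_eq_zero, intChar_eq_one_iff, hτ, ← le_inv_mul_iff₀ (by positivity), mul_one]
    simpa using mem_padicBall.1 ht
  have hball {k : ℕ} (hk : k < m) :
      ∫ t in padicBall p k, (intChar τ t - 1) ∂μ = -((p : ℂ) ^ k)⁻¹ :=
    setIntegral_intChar_sub_one (hτ ▸ pow_lt_pow_right₀ hp hk)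
  have huniv : ∫ t, (intChar τ t - 1) ∂μ = -1 := by
    have htop : (padicBall p 0 : Set ℤ_[p]) = Set.univ := by simp [padicBall]
    simpa [htop] using hball hm
  have hterm (k : ℕ) (hk : k ∈ Finset.range m) :
      ((p : ℝ) ^ s) ^ k • ∫ t in padicBall p k, (intChar τ t - 1) ∂μ =
        ((-((p : ℝ) ^ (s - 1)) ^ k : ℝ) : ℂ) := by
    rw [hball (Finset.mem_range.1 hk), Real.rpow_sub_one hp₀.ne', div_pow, Complex.real_smul]
    push_cast
    ring
  have hdiv (t : ℤ_[p]) :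
      (intChar τ t - 1) / ((‖t‖ ^ s : ℝ) : ℂ) = (‖t‖ ^ s)⁻¹ • (intChar τ t - 1) := by
    rw [Complex.real_smul, Complex.ofReal_inv, div_eq_inv_mul]
  simp_rw [hdiv]
  have hgi : Integrable (fun t ↦ intChar τ t - 1) μ := integrable_intChar.sub (integrable_const 1)
  rw [integral_inv_norm_rpow_smul s hgi hvanish, huniv, Finset.sum_congr rfl hterm,
    Complex.real_smul, Complex.real_smul]
  push_cast [Finset.sum_neg_distrib]
  ring

end Integral

lemma vtConst_mul_geom_sum {α : ℝ} (hα : α ≠ -1) (m : ℕ) :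
    vtConst p α * -((p : ℝ) ^ (-(α + 1)) + (1 - (p : ℝ) ^ (-(α + 1))) *
      ∑ k ∈ Finset.range m, ((p : ℝ) ^ α) ^ k) = ((p : ℝ) ^ α) ^ m - vtShift p α := by
  have hp : (1 : ℝ) < p := mod_cast (Fact.out : p.Prime).one_lt
  have hp₀ : (0 : ℝ) < p := zero_lt_one.trans hp
  have hD : 1 - (p : ℝ) ^ (-(α + 1)) ≠ 0 := by
    have hne : -(α + 1) ≠ 0 := fun h ↦ hα (by linarith)
    refine sub_ne_zero.2 fun h ↦ hne ?_
    rwa [← Real.rpow_right_inj hp₀ hp.ne', Real.rpow_zero, eq_comm]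
  have hmul : (p : ℝ) ^ α * (p : ℝ) ^ (-(α + 1)) = (p : ℝ)⁻¹ := by
    rw [← Real.rpow_add hp₀, ← Real.rpow_neg_one]
    ring_nf
  have hgeom := mul_neg_geom_sum ((p : ℝ) ^ α) m
  rw [vtConst, vtShift, ← hmul]
  field_simp
  linear_combination -(1 - (p : ℝ) ^ (-(α + 1))) * hgeom

theorem vt_integral_of_char_general (α : ℝ) (hα : α ≠ -1) (τ : ℚ_[p]) (m : ℕ) (hm : 0 < m)
    (hτ : ‖τ‖ = (p : ℝ) ^ (m : ℤ)) (μ : Measure ℤ_[p])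
    (hinv : ∀ v : ℤ_[p], μ.map (· + v) = μ) (hprob : μ Set.univ = 1) :
    (vtConst p α : ℂ) *
        ∫ t : ℤ_[p], (eChar p (τ * (t : ℚ_[p])) - 1) / ((‖t‖ ^ (α + 1) : ℝ) : ℂ) ∂μ =
      ((‖τ‖ ^ α - vtShift p α : ℝ) : ℂ) := by
  have : IsProbabilityMeasure μ := ⟨hprob⟩
  have : μ.IsAddLeftInvariant := ⟨fun v ↦ by simpa only [add_comm] using hinv v⟩
  rw [zpow_natCast] at hτ
  have hint := integral_intChar_sub_one_div_norm_rpow (μ := μ) (α + 1) hm hτ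
  rw [add_sub_cancel_right] at hint
  calc
    _ = (vtConst p α : ℂ) * _ := congrArg _ hint
    _ = ((((p : ℝ) ^ α) ^ m - vtShift p α : ℝ) : ℂ) := by
      rw [← Complex.ofReal_mul, vtConst_mul_geom_sum p hα]
    _ = ((‖τ‖ ^ α - vtShift p α : ℝ) : ℂ) := by rw [hτ, Real.rpow_pow_comm p.cast_nonneg]

/-- For `α > 0` and `τ` with `|τ|_p = p^m > 1`,
`((1-p^α)/(1-p^{-(α+1)})) ∫_{ℤ_p} (e^{2πi{τt}_p} - 1)/|t|_p^{α+1} dt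
  = |τ|_p^α - (1-p^{-1})/(1-p^{-(α+1)})`. -/
theorem vt_integral_of_char (α : ℝ) (hα : 0 < α) (τ : ℚ_[p]) (m : ℕ) (hm : 0 < m)
    (hτ : ‖τ‖ = (p : ℝ) ^ (m : ℤ)) (μ : MeasureTheory.Measure ℤ_[p])
    (hinv : ∀ v : ℤ_[p], μ.map (· + v) = μ) (hprob : μ Set.univ = 1) :
    (vtConst p α : ℂ) *
        ∫ t : ℤ_[p], (eChar p (τ * (t : ℚ_[p])) - 1) / ((‖t‖ ^ (α + 1) : ℝ) : ℂ) ∂μ =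
      ((‖τ‖ ^ α - vtShift p α : ℝ) : ℂ) :=
  vt_integral_of_char_general p α (by linarith) τ m hm hτ μ hinv hprob
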